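/- For every GLD-lattice A there exist a unary operation B on the powerset of the set of GLD-filters of A and a map f from A to this powerset such that: (i) the powerset Boolean algebra of the set of GLD-filters, equipped with B, is a GL-algebra (B(univ) = univ, B(X ∩ Y) = B(X) ∩ B(Y), and B((B X)ᶜ ∪ X) ⊆ B X for all X, Y); and (ii) f is injective and satisfies f(⊥) = ∅, f(⊤) = univ, f(x ⊔ y) = f(x) ∪ f(y), f(x ⊓ y) = f(x) ∩ f(y), f(□x) = B(f(x)), and f(◇x) = (B((f(x))ᶜ))ᶜ for all x, y ∈ A. -/

import Mathlib

/-!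
The embedding is `eta`, and the operator is `B X = {F | X ∈ N F}`, where `N F` is the filter of sets
generated by the `eta x` with `□x ∈ F` and the complements of the `eta y` with `◇y ∉ F`.

The two limit axioms and the prime ideal theorem make `eta` an order embedding. Hence an inclusion
`eta x ∩ (eta y)ᶜ ⊆ eta z` or `eta x ∩ (eta y)ᶜ ⊆ (eta z)ᶜ` is an inequality in `A`, and the two
axioms linking `□` and `◇` then say that `eta` commutes with both modalities.

The operator `B` inherits `B X ⊆ B (B X)` from `□x ≤ □□x` and `◇◇x ≤ ◇x`. Since every GLD-filter
contains some `□ⁿ⊥`, it lies in `Bⁿ ∅`, and a transitive normal operator whose iterates on `∅`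
exhaust the space satisfies Löb's law.
-/

/-- A GLD-lattice structure on a bounded distributive lattice `A`, given by the
modal operations `box` and `dia`. -/
structure IsGLDLattice {A : Type*} [DistribLattice A] [BoundedOrder A]
    (box dia : A → A) : Prop where
  box_top : box ⊤ = ⊤
  dia_bot : dia ⊥ = ⊥
  box_sup_le : ∀ x y : A, box (x ⊔ y) ≤ box x ⊔ dia y
  inf_dia_le : ∀ x y : A, box x ⊓ dia y ≤ dia (x ⊓ y)
  dia_sup : ∀ x y : A, dia (x ⊔ y) = dia x ⊔ dia y
  box_inf : ∀ x y : A, box (x ⊓ y) = box x ⊓ box y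
  dia_dia_le : ∀ x : A, dia (dia x) ≤ dia x
  box_le_box_box : ∀ x : A, box x ≤ box (box x)
  isLUB_inf_boxIter : ∀ x : A, IsLUB {y : A | ∃ n : ℕ, y = x ⊓ box^[n] ⊥} x
  isGLB_sup_diaIter : ∀ x : A, IsGLB {y : A | ∃ n : ℕ, y = x ⊔ dia^[n] ⊤} x

/-- A GLD-filter of `A`: a prime filter `F` such that for some `n`,
`◇ⁿ⊤ ∉ F` and `□ⁿ⊥ ∈ F`. -/
structure IsGLDFilter {A : Type*} [DistribLattice A] [BoundedOrder A]
    (box dia : A → A) (F : Set A) : Prop where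
  nonempty : F.Nonempty
  mem_of_le : ∀ x y : A, x ∈ F → x ≤ y → y ∈ F
  inf_mem : ∀ x y : A, x ∈ F → y ∈ F → x ⊓ y ∈ F
  bot_not_mem : ⊥ ∉ F
  prime : ∀ x y : A, x ⊔ y ∈ F → x ∈ F ∨ y ∈ F
  gld : ∃ n : ℕ, dia^[n] ⊤ ∉ F ∧ box^[n] ⊥ ∈ F

/-- The type of GLD-filters of `A`. -/
def GLDFilter (A : Type*) [DistribLattice A] [BoundedOrder A] (box dia : A → A) :=
  {F : Set A // IsGLDFilter box dia F}

/-- `eta x` is the set of GLD-filters containing `x`. -/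
def eta {A : Type*} [DistribLattice A] [BoundedOrder A] (box dia : A → A)
    (x : A) : Set (GLDFilter A box dia) :=
  {F | x ∈ F.1}

/-- A GLD-filter frame of `A`: each `N F` is a filter of the powerset of the
set of GLD-filters, and the neighborhood conditions relating `N` to `box`,
`dia` and `eta` hold. -/
structure IsGLDFilterFrame {A : Type*} [DistribLattice A] [BoundedOrder A]
    (box dia : A → A)
    (N : GLDFilter A box dia → Set (Set (GLDFilter A box dia))) : Prop where
  nonempty : ∀ F, (N F).Nonempty
  mem_of_subset : ∀ F, ∀ X Y : Set (GLDFilter A box dia),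
    X ∈ N F → X ⊆ Y → Y ∈ N F
  inter_mem : ∀ F, ∀ X Y : Set (GLDFilter A box dia),
    X ∈ N F → Y ∈ N F → X ∩ Y ∈ N F
  eta_mem : ∀ F x, box x ∈ F.1 → eta box dia x ∈ N F
  compl_eta_mem : ∀ F x, dia x ∉ F.1 → (eta box dia x)ᶜ ∈ N F
  eta_not_mem : ∀ F x, box x ∉ F.1 → eta box dia x ∉ N F
  compl_eta_not_mem : ∀ F x, dia x ∈ F.1 → (eta box dia x)ᶜ ∉ N F

/-- The box operator on the powerset of the set of GLD-filters induced by a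
neighborhood map `N`. -/
def boxZ {A : Type*} [DistribLattice A] [BoundedOrder A] (box dia : A → A)
    (N : GLDFilter A box dia → Set (Set (GLDFilter A box dia))) :
    Set (GLDFilter A box dia) → Set (GLDFilter A box dia) :=
  fun X => {F | X ∈ N F}

/-- The diamond operator induced by a neighborhood map `N`. -/
def diaZ {A : Type*} [DistribLattice A] [BoundedOrder A] (box dia : A → A)
    (N : GLDFilter A box dia → Set (Set (GLDFilter A box dia))) :
    Set (GLDFilter A box dia) → Set (GLDFilter A box dia) :=
  fun X => (boxZ box dia N Xᶜ)ᶜ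

/-- The canonical neighborhood map of a GLD-lattice. -/
def canonN {A : Type*} [DistribLattice A] [BoundedOrder A] (box dia : A → A)
    (F : GLDFilter A box dia) : Set (Set (GLDFilter A box dia)) :=
  {X | ∃ x y : A, box x ∈ F.1 ∧ dia y ∉ F.1 ∧
    eta box dia x ∩ (eta box dia y)ᶜ ⊆ X}

section HeytingAlgebra

variable {α : Type*} [HeytingAlgebra α] {B : α → α}

lemma iterate_bot_inf_map_himp_le (hinf : ∀ x y, B (x ⊓ y) = B x ⊓ B y)
    (htrans : ∀ x, B x ≤ B (B x)) (x : α) (n : ℕ) : B^[n] ⊥ ⊓ B (B x ⇨ x) ≤ B x := by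
  have hmono : Monotone B := .of_map_inf hinf
  induction n with
  | zero => exact inf_le_left.trans bot_le
  | succ n ih =>
    have hBx : B^[n + 1] ⊥ ⊓ B (B x ⇨ x) ≤ B (B x) := calc
      B^[n + 1] ⊥ ⊓ B (B x ⇨ x) = B (B^[n] ⊥) ⊓ B (B x ⇨ x) := by
        rw [Function.iterate_succ_apply']
      _ ≤ B (B^[n] ⊥) ⊓ B (B (B x ⇨ x)) := inf_le_inf_left _ (htrans _)
      _ = B (B^[n] ⊥ ⊓ B (B x ⇨ x)) := (hinf _ _).symm
      _ ≤ B (B x) := hmono ih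
    calc
      B^[n + 1] ⊥ ⊓ B (B x ⇨ x) ≤ B (B x) ⊓ B (B x ⇨ x) := le_inf hBx inf_le_right
      _ = B (B x ⊓ (B x ⇨ x)) := (hinf _ _).symm
      _ ≤ B x := hmono inf_himp_le

theorem map_himp_le_of_isLUB_iterate_bot (hinf : ∀ x y, B (x ⊓ y) = B x ⊓ B y)
    (htrans : ∀ x, B x ≤ B (B x)) (hlub : IsLUB (Set.range fun n => B^[n] ⊥) ⊤) (x : α) :
    B (B x ⇨ x) ≤ B x := by
  have htop : ⊤ ≤ B (B x ⇨ x) ⇨ B x := (isLUB_le_iff hlub).2 <| by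
    rintro _ ⟨n, rfl⟩
    exact le_himp_iff.2 (iterate_bot_inf_map_himp_le hinf htrans x n)
  exact himp_eq_top_iff.1 (top_le_iff.1 htop)

end HeytingAlgebra

lemma exists_isPrime_mem_notMem_of_not_le {α : Type*} [DistribLattice α] {a b : α}
    (hab : ¬ a ≤ b) : ∃ J : Order.Ideal α, J.IsPrime ∧ b ∈ J ∧ a ∉ J := by
  have hdisj : Disjoint (Order.PFilter.principal a : Set α) (Order.Ideal.principal b) :=
    Set.disjoint_left.2 fun _ ha hb =>
      hab ((Order.PFilter.mem_principal.1 ha).trans (Order.Ideal.mem_principal.1 hb))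
  obtain ⟨J, hJ, hbJ, haJ⟩ := DistribLattice.prime_ideal_of_disjoint_filter_ideal hdisj
  exact ⟨J, hJ, Order.Ideal.principal_le_iff.1 hbJ,
    Set.disjoint_left.1 haJ (Order.PFilter.mem_principal.2 le_rfl)⟩

section GLDLattice

variable {A : Type*} [DistribLattice A] [BoundedOrder A] {box dia : A → A}

lemma IsGLDLattice.box_mono (h : IsGLDLattice box dia) : Monotone box :=
  .of_map_inf h.box_inf

lemma IsGLDLattice.dia_mono (h : IsGLDLattice box dia) : Monotone dia :=
  .of_map_sup h.dia_sup

lemma IsGLDLattice.le_of_forall_inf_box_le_sup_dia (h : IsGLDLattice box dia) {a b : A}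
    (hab : ∀ n : ℕ, a ⊓ box^[n] ⊥ ≤ b ⊔ dia^[n] ⊤) : a ≤ b := by
  refine (isLUB_le_iff (h.isLUB_inf_boxIter a)).2 ?_
  rintro _ ⟨n, rfl⟩
  refine (le_isGLB_iff (h.isGLB_sup_diaIter b)).2 ?_
  rintro _ ⟨m, rfl⟩
  have hbox : box^[n] ⊥ ≤ box^[max n m] ⊥ :=
    h.box_mono.monotone_iterate_of_le_map bot_le (le_max_left n m)
  have hdia : dia^[max n m] ⊤ ≤ dia^[m] ⊤ :=
    h.dia_mono.antitone_iterate_of_map_le le_top (le_max_right n m)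
  calc
    a ⊓ box^[n] ⊥ ≤ a ⊓ box^[max n m] ⊥ := inf_le_inf_left a hbox
    _ ≤ b ⊔ dia^[max n m] ⊤ := hab (max n m)
    _ ≤ b ⊔ dia^[m] ⊤ := sup_le_sup_left hdia b

lemma isGLDFilter_compl_of_isPrime {J : Order.Ideal A} (hJ : J.IsPrime) {n : ℕ}
    (hdia : dia^[n] ⊤ ∈ J) (hbox : box^[n] ⊥ ∉ J) : IsGLDFilter box dia (J : Set A)ᶜ where
  nonempty := ⟨box^[n] ⊥, hbox⟩
  mem_of_le _ _ hx hxy hy := hx (J.lower hxy hy)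
  inf_mem _ _ hx hy hxy := (hJ.mem_or_mem hxy).elim hx hy
  bot_not_mem hbot := hbot J.bot_mem
  prime _ _ hxy := not_and_or.1 fun hmem => hxy (Order.Ideal.sup_mem_iff.2 hmem)
  gld := ⟨n, fun hc => hc hdia, hbox⟩

theorem exists_gldFilter_mem_notMem (h : IsGLDLattice box dia) {a b : A} (hab : ¬ a ≤ b) :
    ∃ F : GLDFilter A box dia, a ∈ F.1 ∧ b ∉ F.1 := by
  obtain ⟨n, hn⟩ := not_forall.1 (mt h.le_of_forall_inf_box_le_sup_dia hab)
  obtain ⟨J, hJ, hbJ, haJ⟩ := exists_isPrime_mem_notMem_of_not_le hn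
  obtain ⟨hb, hdia⟩ := Order.Ideal.sup_mem_iff.1 hbJ
  have ha : a ∉ J := fun ha => haJ (J.lower inf_le_left ha)
  have hbox : box^[n] ⊥ ∉ J := fun hbox => haJ (J.lower inf_le_right hbox)
  exact ⟨⟨(J : Set A)ᶜ, isGLDFilter_compl_of_isPrime hJ hdia hbox⟩, ha, fun hc => hc hb⟩

lemma GLDFilter.top_mem (F : GLDFilter A box dia) : ⊤ ∈ F.1 :=
  let ⟨x, hx⟩ := F.2.nonempty
  F.2.mem_of_le x ⊤ hx le_top

lemma eta_bot : eta box dia ⊥ = ∅ :=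
  Set.eq_empty_of_forall_notMem fun F => F.2.bot_not_mem

lemma eta_top : eta box dia ⊤ = Set.univ :=
  Set.eq_univ_of_forall GLDFilter.top_mem

lemma eta_mono : Monotone (eta box dia) :=
  fun x y hxy F hx => F.2.mem_of_le x y hx hxy

lemma eta_sup (x y : A) : eta box dia (x ⊔ y) = eta box dia x ∪ eta box dia y :=
  Set.Subset.antisymm (fun F => F.2.prime x y) (eta_mono.le_map_sup x y)

lemma eta_inf (x y : A) : eta box dia (x ⊓ y) = eta box dia x ∩ eta box dia y :=
  Set.Subset.antisymm (eta_mono.map_inf_le x y) fun F hF => F.2.inf_mem x y hF.1 hF.2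

theorem eta_subset_eta_iff (h : IsGLDLattice box dia) {x y : A} :
    eta box dia x ⊆ eta box dia y ↔ x ≤ y := by
  refine ⟨fun hxy => ?_, fun hxy => eta_mono hxy⟩
  by_contra hle
  obtain ⟨F, hx, hy⟩ := exists_gldFilter_mem_notMem h hle
  exact hy (hxy hx)

theorem eta_injective (h : IsGLDLattice box dia) : Function.Injective (eta box dia) :=
  fun _ _ hxy => le_antisymm ((eta_subset_eta_iff h).1 hxy.subset)
    ((eta_subset_eta_iff h).1 hxy.superset)

lemma eta_inter_compl_subset_eta_iff (h : IsGLDLattice box dia) {x y z : A} :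
    eta box dia x ∩ (eta box dia y)ᶜ ⊆ eta box dia z ↔ x ≤ z ⊔ y := by
  rw [Set.inter_subset, compl_compl, ← eta_sup, eta_subset_eta_iff h, sup_comm]

lemma eta_inter_compl_subset_compl_eta_iff (h : IsGLDLattice box dia) {x y z : A} :
    eta box dia x ∩ (eta box dia y)ᶜ ⊆ (eta box dia z)ᶜ ↔ x ⊓ z ≤ y := by
  rw [Set.inter_subset, compl_compl, Set.subset_union_compl_iff_inter_subset, ← eta_inf,
    eta_subset_eta_iff h]

namespace IsGLDFilterFrame

variable {N : GLDFilter A box dia → Set (Set (GLDFilter A box dia))}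

lemma boxZ_univ (hN : IsGLDFilterFrame box dia N) : boxZ box dia N Set.univ = Set.univ :=
  Set.eq_univ_of_forall fun F =>
    let ⟨X, hX⟩ := hN.nonempty F
    hN.mem_of_subset F X _ hX (Set.subset_univ X)

lemma boxZ_inter (hN : IsGLDFilterFrame box dia N) (X Y : Set (GLDFilter A box dia)) :
    boxZ box dia N (X ∩ Y) = boxZ box dia N X ∩ boxZ box dia N Y := by
  have hmono : Monotone (boxZ box dia N) := fun X Y hXY F hX => hN.mem_of_subset F X Y hX hXY
  exact Set.Subset.antisymm (hmono.map_inf_le X Y) fun F hF => hN.inter_mem F X Y hF.1 hF.2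

lemma eta_box (hN : IsGLDFilterFrame box dia N) (x : A) :
    eta box dia (box x) = boxZ box dia N (eta box dia x) :=
  Set.ext fun F => ⟨hN.eta_mem F x, not_imp_not.1 (hN.eta_not_mem F x)⟩

lemma eta_dia (hN : IsGLDFilterFrame box dia N) (x : A) :
    eta box dia (dia x) = diaZ box dia N (eta box dia x) :=
  Set.ext fun F => ⟨hN.compl_eta_not_mem F x, not_imp_comm.1 (hN.compl_eta_mem F x)⟩

lemma eta_iterate_box_bot (hN : IsGLDFilterFrame box dia N) (n : ℕ) :
    eta box dia (box^[n] ⊥) = (boxZ box dia N)^[n] ∅ := by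
  have hsemi : Function.Semiconj (eta box dia) box (boxZ box dia N) := hN.eta_box
  rw [(hsemi.iterate_right n).eq, eta_bot]

lemma isLUB_range_iterate_boxZ_empty (hN : IsGLDFilterFrame box dia N) :
    IsLUB (Set.range fun n => (boxZ box dia N)^[n] ∅) Set.univ := by
  refine ⟨fun X _ => Set.subset_univ X, fun X hX F _ => ?_⟩
  obtain ⟨n, -, hn⟩ := F.2.gld
  exact hX ⟨n, rfl⟩ ((hN.eta_iterate_box_bot n).subset hn)

theorem boxZ_loeb (hN : IsGLDFilterFrame box dia N)
    (htrans : ∀ X, boxZ box dia N X ⊆ boxZ box dia N (boxZ box dia N X))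
    (X : Set (GLDFilter A box dia)) :
    boxZ box dia N ((boxZ box dia N X)ᶜ ∪ X) ⊆ boxZ box dia N X := by
  have hhimp : boxZ box dia N X ⇨ X = (boxZ box dia N X)ᶜ ∪ X := himp_eq.trans (Set.union_comm _ _)
  rw [← hhimp]
  exact map_himp_le_of_isLUB_iterate_bot hN.boxZ_inter htrans
    hN.isLUB_range_iterate_boxZ_empty X

end IsGLDFilterFrame

section canonN

variable {F : GLDFilter A box dia} {X Y : Set (GLDFilter A box dia)} {x : A}

lemma eta_mem_canonN (h : IsGLDLattice box dia) (hx : box x ∈ F.1) :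
    eta box dia x ∈ canonN box dia F :=
  ⟨x, ⊥, hx, h.dia_bot.symm ▸ F.2.bot_not_mem, Set.inter_subset_left⟩

lemma compl_eta_mem_canonN (h : IsGLDLattice box dia) (hx : dia x ∉ F.1) :
    (eta box dia x)ᶜ ∈ canonN box dia F :=
  ⟨⊤, x, h.box_top.symm ▸ F.top_mem, hx, Set.inter_subset_right⟩

lemma inter_mem_canonN (h : IsGLDLattice box dia) (hX : X ∈ canonN box dia F)
    (hY : Y ∈ canonN box dia F) : X ∩ Y ∈ canonN box dia F := by
  obtain ⟨x, y, hx, hy, hxy⟩ := hX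
  obtain ⟨x', y', hx', hy', hxy'⟩ := hY
  have hbox : box (x ⊓ x') ∈ F.1 := h.box_inf x x' ▸ F.2.inf_mem _ _ hx hx'
  have hdia : dia (y ⊔ y') ∉ F.1 := fun hc =>
    (F.2.prime _ _ (h.dia_sup y y' ▸ hc)).elim hy hy'
  refine ⟨x ⊓ x', y ⊔ y', hbox, hdia, ?_⟩
  rw [eta_inf, eta_sup, Set.compl_union, Set.inter_inter_inter_comm]
  exact Set.inter_subset_inter hxy hxy'

lemma box_mem_of_eta_mem_canonN (h : IsGLDLattice box dia)
    (hx : eta box dia x ∈ canonN box dia F) : box x ∈ F.1 := by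
  obtain ⟨u, v, hu, hv, huv⟩ := hx
  have hle : box u ≤ box x ⊔ dia v := calc
    box u ≤ box (x ⊔ v) := h.box_mono ((eta_inter_compl_subset_eta_iff h).1 huv)
    _ ≤ box x ⊔ dia v := h.box_sup_le x v
  exact (F.2.prime _ _ (F.2.mem_of_le _ _ hu hle)).resolve_right hv

lemma dia_notMem_of_compl_eta_mem_canonN (h : IsGLDLattice box dia)
    (hx : (eta box dia x)ᶜ ∈ canonN box dia F) : dia x ∉ F.1 := by
  obtain ⟨u, v, hu, hv, huv⟩ := hx
  have hle : box u ⊓ dia x ≤ dia v := calc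
    box u ⊓ dia x ≤ dia (u ⊓ x) := h.inf_dia_le u x
    _ ≤ dia v := h.dia_mono ((eta_inter_compl_subset_compl_eta_iff h).1 huv)
  exact fun hdia => hv (F.2.mem_of_le _ _ (F.2.inf_mem _ _ hu hdia) hle)

end canonN

theorem isGLDFilterFrame_canonN (h : IsGLDLattice box dia) :
    IsGLDFilterFrame box dia (canonN box dia) where
  nonempty F := ⟨eta box dia ⊤, eta_mem_canonN h (h.box_top.symm ▸ F.top_mem)⟩
  mem_of_subset _ _ _ := fun ⟨x, y, hx, hy, hX⟩ hXY => ⟨x, y, hx, hy, hX.trans hXY⟩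
  inter_mem _ _ _ := inter_mem_canonN h
  eta_mem _ _ := eta_mem_canonN h
  compl_eta_mem _ _ := compl_eta_mem_canonN h
  eta_not_mem _ _ := mt (box_mem_of_eta_mem_canonN h)
  compl_eta_not_mem _ _ hx hc := dia_notMem_of_compl_eta_mem_canonN h hc hx

theorem boxZ_canonN_subset_boxZ_boxZ (h : IsGLDLattice box dia) (X : Set (GLDFilter A box dia)) :
    boxZ box dia (canonN box dia) X ⊆
      boxZ box dia (canonN box dia) (boxZ box dia (canonN box dia) X) := by
  rintro F ⟨x, y, hx, hy, hX⟩
  have hbox : box (box x) ∈ F.1 := F.2.mem_of_le _ _ hx (h.box_le_box_box x)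
  have hdia : dia (dia y) ∉ F.1 := fun hc => hy (F.2.mem_of_le _ _ hc (h.dia_dia_le y))
  exact ⟨box x, dia y, hbox, hdia, fun G ⟨hGx, hGy⟩ => ⟨x, y, hGx, hGy, hX⟩⟩

end GLDLattice

/-- For every GLD-lattice `A` there exist an operator `B` on the powerset of
the set of GLD-filters making it a GL-algebra, and an injective homomorphism
`f` of modal distributive lattices from `A` into that GL-algebra. -/
theorem stmt8 {A : Type*} [DistribLattice A] [BoundedOrder A] (box dia : A → A)
    (h : IsGLDLattice box dia) :
    ∃ (B : Set (GLDFilter A box dia) → Set (GLDFilter A box dia))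
      (f : A → Set (GLDFilter A box dia)),
      (B Set.univ = Set.univ ∧
       (∀ X Y : Set (GLDFilter A box dia), B (X ∩ Y) = B X ∩ B Y) ∧
       (∀ X : Set (GLDFilter A box dia), B ((B X)ᶜ ∪ X) ⊆ B X)) ∧
      Function.Injective f ∧
      f (⊥ : A) = ∅ ∧
      f (⊤ : A) = Set.univ ∧
      (∀ x y : A, f (x ⊔ y) = f x ∪ f y) ∧
      (∀ x y : A, f (x ⊓ y) = f x ∩ f y) ∧
      (∀ x : A, f (box x) = B (f x)) ∧
      (∀ x : A, f (dia x) = (B (f x)ᶜ)ᶜ) := by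
  have hN := isGLDFilterFrame_canonN h
  exact ⟨boxZ box dia (canonN box dia), eta box dia,
    ⟨hN.boxZ_univ, hN.boxZ_inter, hN.boxZ_loeb (boxZ_canonN_subset_boxZ_boxZ h)⟩,
    eta_injective h, eta_bot, eta_top, eta_sup, eta_inf, hN.eta_box, hN.eta_dia⟩
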